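/- Let G be a digraph and let X,Y ⊆ V(G) be such that no arc of G has its head in X∖Y and no arc of G has its tail in Y∖X, let G' be the associated auxiliary undirected graph, and let k, r be nonnegative integers. Then G contains k pairwise vertex-disjoint nontrivial directed paths from X to Y together with a set R ⊆ X∩Y with |R| = r such that no vertex of R lies on any of these paths, if and only if G' has a matching M of size k + |V(G)∖(X∪Y)| that leaves at least r vertices of X∩Y unsaturated. -/

import Mathlib

/-- `p` is a directed path: a nonempty list of pairwise distinct vertices in which
consecutive vertices are joined by arcs of the digraph with arc relation `A`. -/
def IsPath {V : Type*} (A : V → V → Prop) (p : List V) : Prop :=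
  p ≠ [] ∧ p.Nodup ∧ p.Chain' A

/-- `p` is a directed `(u,v)`-path. -/
def IsPathFT {V : Type*} (A : V → V → Prop) (u v : V) (p : List V) : Prop :=
  IsPath A p ∧ p.head? = some u ∧ p.getLast? = some v

/-- Base (oriented) relation of the auxiliary undirected graph `G'` associated with the
digraph `A` and the sets `X, Y`.  Vertices: `Sum.inl v` is the original vertex `v`, and
`Sum.inr v` is the copy `v'` of `v` (used only for `v ∉ X ∪ Y`).
Edges: `{v, v'}` for every `v ∉ X ∪ Y`; for every arc `(u,v)`, the edge `{u, v}` if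
`v ∈ X ∪ Y` and the edge `{u, v'}` otherwise. -/
def auxRel {V : Type*} [DecidableEq V] (A : V → V → Prop) (X Y : Finset V) :
    V ⊕ V → V ⊕ V → Prop
  | .inl u, .inl w => A u w ∧ w ∈ X ∪ Y
  | .inl u, .inr w => (A u w ∧ w ∉ X ∪ Y) ∨ (u = w ∧ u ∉ X ∪ Y)
  | .inr _, _ => False

/-- Adjacency (symmetrized) in the auxiliary undirected graph `G'`. -/
def auxAdj {V : Type*} [DecidableEq V] (A : V → V → Prop) (X Y : Finset V)
    (a b : V ⊕ V) : Prop :=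
  auxRel A X Y a b ∨ auxRel A X Y b a

/-- `M` is a matching of the undirected graph with adjacency `Adj`: a set of edges
(each recorded once, as an ordered pair of distinct adjacent vertices) that are
pairwise disjoint. -/
def IsMatching {W : Type*} (Adj : W → W → Prop) (M : Finset (W × W)) : Prop :=
  (∀ e ∈ M, Adj e.1 e.2 ∧ e.1 ≠ e.2) ∧
  ∀ e ∈ M, ∀ f ∈ M, e ≠ f →
    e.1 ≠ f.1 ∧ e.1 ≠ f.2 ∧ e.2 ≠ f.1 ∧ e.2 ≠ f.2

/-- `w` is saturated by the matching `M`. -/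
def SaturatedBy {W : Type*} (M : Finset (W × W)) (w : W) : Prop :=
  ∃ e ∈ M, w = e.1 ∨ w = e.2

/-!
Write `B = X ∪ Y`.  Direct each edge of a matching from the original vertex to the vertex whose copy
it uses: on `V` this gives a set `T` of arcs, with loops standing for the edges `{v, v'}`, in which
every vertex is left and entered at most once and no vertex of `B` is both.  Hence from every vertex
of `B` that `T` leaves, a trail starts which never returns and is disjoint from the other trails.
If `T` has `k + |V \ B|` elements, then counting the vertices that `T` leaves shows that at least
`k` of these trails end in `B`.  Conversely, disjoint paths, cut at their first return to `B`, and
the loops at the uncovered vertices outside `B` form such a `T`: a path with `m` inner vertices has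
`m + 1` arcs.  By the conditions on `X` and `Y`, a nontrivial path with both ends in `B`
leads from `X` to `Y`.
-/

section ReflTransGen

open Relation

variable {V : Type*} {r : V → V → Prop} {s t v : V}

lemma eq_of_reflTransGen_of_leftUnique (hr : Relator.LeftUnique r) (hs : ∀ a, ¬ r a s)
    (ht : ∀ a, ¬ r a t) (hsv : ReflTransGen r s v) (htv : ReflTransGen r t v) : s = t := by
  rcases ReflTransGen.total_of_right_unique hr.flip hsv.swap htv.swap with h | h <;>
    rcases ReflTransGen.cases_head h with rfl | ⟨c, hc, -⟩
  · rfl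
  · exact (hs c hc).elim
  · rfl
  · exact (ht c hc).elim

-- Otherwise a successor map on the set reachable from `s` would be injective, hence surjective by
-- finiteness, and would hit `s`.
lemma exists_reflTransGen_forall_not_rel [Finite V] (hr : Relator.LeftUnique r)
    (hs : ∀ a, ¬ r a s) : ∃ t, ReflTransGen r s t ∧ ∀ w, ¬ r t w := by
  by_contra! hsucc
  choose f hf using fun t : {t // ReflTransGen r s t} ↦ hsucc t t.2
  let next (t : {t // ReflTransGen r s t}) : {t // ReflTransGen r s t} := ⟨f t, t.2.tail (hf t)⟩
  have next_injective : Function.Injective next := fun a b hab ↦ by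
    have hfab : f a = f b := congrArg Subtype.val hab
    exact Subtype.ext (hr (hf a) (hfab ▸ hf b))
  obtain ⟨a, ha⟩ := Finite.surjective_of_injective next_injective ⟨s, .refl⟩
  have hfa : f a = s := congrArg Subtype.val ha
  have has : r a (f a) := hf a
  rw [hfa] at has
  exact hs a has

end ReflTransGen

section Path

open Relation

variable {V : Type*} {A : V → V → Prop} {p : List V} {u v w : V}

lemma IsPath.of_imp_of_ne {A' : V → V → Prop} (h : IsPath A p)
    (hAA' : ∀ u v, A u v → u ≠ v → A' u v) : IsPath A' p := by
  obtain ⟨hne, hnodup, hchain⟩ := h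
  refine ⟨hne, hnodup, List.isChain_iff_getElem.2 fun i hi ↦ ?_⟩
  exact hAA' _ _ (List.isChain_iff_getElem.1 hchain i hi)
    fun heq ↦ by have := hnodup.getElem_inj_iff.1 heq; omega

lemma IsPathFT.reflTransGen_of_mem (h : IsPathFT A u v p) (hw : w ∈ p) : ReflTransGen A u w := by
  obtain ⟨⟨-, -, hchain⟩, hhead, -⟩ := h
  refine List.IsChain.induction (ReflTransGen A u) p hchain (fun _ _ hxy hx ↦ hx.tail hxy)
    (fun hne ↦ ?_) w hw
  rw [List.head?_eq_some_head hne, Option.some_inj] at hhead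
  rw [hhead]

lemma IsPathFT.reflTransGen (h : IsPathFT A u v p) : ReflTransGen A u v :=
  h.reflTransGen_of_mem (List.mem_of_getLast? h.2.2)

lemma exists_isPathFT_of_reflTransGen (h : ReflTransGen A u v) : ∃ p, IsPathFT A u v p := by
  induction h using ReflTransGen.head_induction_on with
  | refl => exact ⟨[v], ⟨by simp, by simp, List.isChain_singleton v⟩, rfl, rfl⟩
  | @head a b hab _ ih =>
    obtain ⟨p, ⟨hne, hnodup, hchain⟩, hhead, hlast⟩ := ih
    by_cases ha : a ∈ p
    · obtain ⟨l₁, l₂, rfl⟩ := List.append_of_mem ha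
      have hsuffix : a :: l₂ <:+ l₁ ++ a :: l₂ := List.suffix_append _ _
      exact ⟨a :: l₂, ⟨by simp, hnodup.sublist hsuffix.sublist, List.IsChain.suffix hchain hsuffix⟩,
        rfl, by simpa using hlast⟩
    · refine ⟨a :: p, ⟨by simp, List.nodup_cons.2 ⟨ha, hnodup⟩, ?_⟩, rfl, ?_⟩
      · refine List.isChain_cons.2 ⟨fun y hy ↦ ?_, hchain⟩
        rw [hhead, Option.mem_some_iff] at hy
        exact hy ▸ hab
      · rw [List.getLast?_cons, hlast, Option.getD_some]

variable [DecidableEq V]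

lemma IsPathFT.formPerm_apply_last (h : IsPathFT A u v p) : p.formPerm v = u := by
  obtain ⟨-, hhead, hlast⟩ := h
  obtain ⟨l, rfl⟩ := List.head?_eq_some_iff.1 hhead
  rw [List.getLast?_eq_some_getLast (List.cons_ne_nil u l), Option.some_inj] at hlast
  rw [← hlast, List.formPerm_apply_getLast]

lemma IsPathFT.rel_formPerm_apply (h : IsPathFT A u v p) (hw : w ∈ p) (hwv : w ≠ v) :
    A w (p.formPerm w) := by
  obtain ⟨⟨-, hnodup, hchain⟩, -, hlast⟩ := h
  obtain ⟨i, hi, rfl⟩ := List.getElem_of_mem hw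
  have hi' : i + 1 < p.length := by
    by_contra hlen
    obtain rfl : i = p.length - 1 := by omega
    rw [List.getLast?_eq_getElem?, List.getElem?_eq_getElem hi, Option.some_inj] at hlast
    exact hwv hlast
  rw [List.formPerm_apply_lt_getElem p hnodup i hi']
  exact List.isChain_iff_getElem.1 hchain i hi'

end Path

/-- A `B`-path: a nontrivial directed `(x,z)`-path whose vertices in `B` are exactly its two
ends. -/
structure IsBPath {V : Type*} (A : V → V → Prop) (B : Finset V) (x z : V) (p : List V) : Prop where
  isPathFT : IsPathFT A x z p
  left_mem : x ∈ B
  right_mem : z ∈ B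
  ne : x ≠ z
  eq_or_eq : ∀ v ∈ p, v ∈ B → v = x ∨ v = z

/-- A family of pairwise vertex-disjoint nontrivial directed paths from `X` to `Y`. -/
def IsPathPacking {V ι : Type*} (A : V → V → Prop) (X Y : Finset V) (P : ι → List V) : Prop :=
  (∀ i, ∃ x y, x ∈ X ∧ y ∈ Y ∧ x ≠ y ∧ IsPathFT A x y (P i)) ∧
    Pairwise fun i j ↦ (P i).Disjoint (P j)

/-- The combinatorial trace left on `V` by a matching of the auxiliary graph when each of its edges
is directed from an original vertex to the vertex whose copy it uses: pairs that are arcs or loops,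
at most one leaving and at most one entering each vertex, and never both at a vertex of `B` (so
loops occur only outside `B`).  Such a set consists of disjoint paths with interior outside `B`,
cycles outside `B`, and loops. -/
structure IsLinkage {V : Type*} (A : V → V → Prop) (B : Finset V) (T : Finset (V × V)) : Prop where
  rel_or_eq : ∀ e ∈ T, A e.1 e.2 ∨ e.1 = e.2
  fst_injOn : Set.InjOn Prod.fst (T : Set (V × V))
  snd_injOn : Set.InjOn Prod.snd (T : Set (V × V))
  fst_ne_snd : ∀ e ∈ T, ∀ f ∈ T, e.1 ∈ B → e.1 ≠ f.2

section PathsToLinkage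

variable {V ι : Type*} {A : V → V → Prop} {B : Finset V}

lemma IsPathFT.exists_isBPath {x y : V} {p : List V} (h : IsPathFT A x y p) (hx : x ∈ B)
    (hy : y ∈ B) (hxy : x ≠ y) : ∃ z q, IsBPath A B x z q ∧ q ⊆ p := by
  classical
  obtain ⟨⟨-, hnodup, hchain⟩, hhead, hlast⟩ := h
  obtain ⟨l, rfl⟩ := List.head?_eq_some_iff.1 hhead
  have hyl : y ∈ l := (List.mem_cons.1 (List.mem_of_getLast? hlast)).resolve_left hxy.symm
  obtain ⟨z, hz⟩ : ∃ z, l.find? (· ∈ B) = some z :=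
    Option.isSome_iff_exists.1 (List.find?_isSome.2 ⟨y, hyl, decide_eq_true hy⟩)
  obtain ⟨hzB, m, l', rfl, hm⟩ := List.find?_eq_some_iff_append.1 hz
  have hprefix : x :: (m ++ [z]) <+: x :: (m ++ z :: l') := ⟨l', by simp⟩
  have hpath : IsPath A (x :: (m ++ [z])) :=
    ⟨by simp, hnodup.sublist hprefix.sublist, List.IsChain.prefix hchain hprefix⟩
  refine ⟨z, x :: (m ++ [z]), ⟨⟨hpath, rfl, List.getLast?_concat (l := x :: m)⟩, hx,
    of_decide_eq_true hzB, ?_, ?_⟩, hprefix.subset⟩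
  · rintro rfl
    simp at hnodup
  · intro v hv hvB
    rcases List.mem_cons.1 hv with hvx | hv
    · exact .inl hvx
    rcases List.mem_append.1 hv with hvm | hvz
    · exact absurd hvB (by simpa using hm v hvm)
    · exact .inr (List.mem_singleton.1 hvz)

variable [DecidableEq V]

lemma exists_injective_eq_formPerm {P : ι → List V}
    (hP : Pairwise fun i j ↦ (P i).Disjoint (P j)) :
    ∃ σ : V → V, σ.Injective ∧ (∀ i, ∀ v ∈ P i, σ v = (P i).formPerm v) ∧
      ∀ v, (∀ i, v ∉ P i) → σ v = v := by
  classical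
  have eq_of_mem {i j v} (hi : v ∈ P i) (hj : v ∈ P j) : i = j :=
    by_contra fun hij ↦ hP hij hi hj
  let σ (v : V) : V := if h : ∃ i, v ∈ P i then (P h.choose).formPerm v else v
  have σ_mem (i v) (hv : v ∈ P i) : σ v = (P i).formPerm v := by
    have h : ∃ i, v ∈ P i := ⟨i, hv⟩
    simp only [σ, dif_pos h, eq_of_mem h.choose_spec hv]
  have σ_notMem (v) (hv : ∀ i, v ∉ P i) : σ v = v := dif_neg (not_exists.2 hv)
  have mem_iff (i v) : σ v ∈ P i ↔ v ∈ P i := by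
    by_cases h : ∃ j, v ∈ P j
    · obtain ⟨j, hj⟩ := h
      have hσj : σ v ∈ P j := σ_mem j v hj ▸ List.formPerm_apply_mem_of_mem hj
      exact ⟨fun hi ↦ eq_of_mem hσj hi ▸ hj, fun hi ↦ eq_of_mem hj hi ▸ hσj⟩
    · rw [σ_notMem v (not_exists.1 h)]
  refine ⟨σ, fun v w hvw ↦ ?_, σ_mem, σ_notMem⟩
  by_cases h : ∃ i, v ∈ P i
  · obtain ⟨i, hv⟩ := h
    have hw : w ∈ P i := (mem_iff i w).1 (hvw ▸ (mem_iff i v).2 hv)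
    rw [σ_mem i v hv, σ_mem i w hw] at hvw
    exact (P i).formPerm.injective hvw
  · have hv := not_exists.1 h
    have hw (i) : w ∉ P i := fun hw ↦ hv i ((mem_iff i v).1 (hvw ▸ (mem_iff i w).2 hw))
    rwa [σ_notMem v hv, σ_notMem w hw] at hvw

lemma isLinkage_image_of_injective {σ : V → V} {D : Finset V} (hσ : σ.Injective)
    (hA : ∀ v ∈ D, A v (σ v) ∨ v = σ v) (hB : ∀ v ∈ D, ∀ w ∈ D, v ∈ B → v ≠ σ w) :
    IsLinkage A B (D.image fun v ↦ (v, σ v)) where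
  rel_or_eq := by simpa only [Finset.forall_mem_image] using hA
  fst_injOn e he f hf hef := by
    obtain ⟨v, -, rfl⟩ := Finset.mem_image.1 he
    obtain ⟨w, -, rfl⟩ := Finset.mem_image.1 hf
    exact congrArg (fun v ↦ (v, σ v)) hef
  snd_injOn e he f hf hef := by
    obtain ⟨v, -, rfl⟩ := Finset.mem_image.1 he
    obtain ⟨w, -, rfl⟩ := Finset.mem_image.1 hf
    exact congrArg (fun v ↦ (v, σ v)) (hσ hef)
  fst_ne_snd := by simpa only [Finset.forall_mem_image] using hB

-- Closing every path into a cycle and fixing all other vertices gives a permutation; the linkage is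
-- its graph, restricted to the starting vertices of the paths and the vertices outside `B`.
lemma exists_isLinkage_of_isBPath [Fintype V] [Fintype ι] {x z : ι → V} {Q : ι → List V}
    (hQ : ∀ i, IsBPath A B (x i) (z i) (Q i)) (hdisj : Pairwise fun i j ↦ (Q i).Disjoint (Q j)) :
    ∃ T, IsLinkage A B T ∧ T.card = Fintype.card ι + Bᶜ.card ∧
      ∀ v ∈ B, SaturatedBy T v → ∃ i, v ∈ Q i := by
  obtain ⟨σ, σ_inj, σ_mem, σ_notMem⟩ := exists_injective_eq_formPerm hdisj
  have x_mem (i) : x i ∈ Q i := List.mem_of_head? (hQ i).isPathFT.2.1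
  have z_mem (i) : z i ∈ Q i := List.mem_of_getLast? (hQ i).isPathFT.2.2
  have x_inj : x.Injective := fun i j hij ↦
    by_contra fun hne ↦ hdisj hne (x_mem i) (hij ▸ x_mem j)
  have σ_z (i) : σ (z i) = x i := (σ_mem i _ (z_mem i)).trans (hQ i).isPathFT.formPerm_apply_last
  set D : Finset V := Finset.univ.image x ∪ Bᶜ with hD
  have mem_D {v} : v ∈ D ↔ (∃ i, x i = v) ∨ v ∉ B := by simp [hD]
  have z_notMem_D (i) : z i ∉ D := by
    rw [mem_D, not_or, not_not]
    refine ⟨fun ⟨j, hj⟩ ↦ ?_, (hQ i).right_mem⟩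
    obtain rfl : j = i := by_contra fun hne ↦ hdisj hne (x_mem j) (hj ▸ z_mem i)
    exact (hQ j).ne hj
  refine ⟨D.image fun v ↦ (v, σ v), isLinkage_image_of_injective σ_inj ?_ ?_, ?_, ?_⟩
  · intro v hv
    by_cases h : ∃ i, v ∈ Q i
    · obtain ⟨i, hi⟩ := h
      rw [σ_mem i v hi]
      exact .inl ((hQ i).isPathFT.rel_formPerm_apply hi fun hvz ↦ z_notMem_D i (hvz ▸ hv))
    · exact .inr (σ_notMem v (not_exists.1 h)).symm
  · intro v hv w hw hvB hvw
    obtain ⟨i, rfl⟩ := (mem_D.1 hv).resolve_right (not_not.2 hvB)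
    exact z_notMem_D i (σ_inj ((σ_z i).trans hvw) ▸ hw)
  · have hdisjoint : Disjoint (Finset.univ.image x) Bᶜ := by
      simp [Finset.disjoint_left, (hQ _).left_mem]
    rw [Finset.card_image_of_injective _ fun v w h ↦ (Prod.mk.inj h).1, hD,
      Finset.card_union_of_disjoint hdisjoint, Finset.card_image_of_injective _ x_inj,
      Finset.card_univ]
  · rintro v hvB ⟨e, he, hve⟩
    obtain ⟨w, hw, rfl⟩ := Finset.mem_image.1 he
    by_contra! hvQ
    have hwv : w = v := hve.elim Eq.symm fun h ↦ σ_inj (h.symm.trans (σ_notMem v hvQ).symm)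
    obtain ⟨i, rfl⟩ := (mem_D.1 (hwv ▸ hw)).resolve_right (not_not.2 hvB)
    exact hvQ i (x_mem i)

lemma IsPathPacking.exists_isLinkage [Fintype V] [Fintype ι] {P : ι → List V}
    (hP : IsPathPacking A B B P) :
    ∃ T, IsLinkage A B T ∧ T.card = Fintype.card ι + Bᶜ.card ∧
      ∀ v ∈ B, SaturatedBy T v → ∃ i, v ∈ P i := by
  obtain ⟨hpath, hdisj⟩ := hP
  have hreduce (i) : ∃ x z q, IsBPath A B x z q ∧ q ⊆ P i := by
    obtain ⟨x, y, hx, hy, hxy, hp⟩ := hpath i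
    exact ⟨x, hp.exists_isBPath hx hy hxy⟩
  choose x z Q hQ hQP using hreduce
  obtain ⟨T, hT, hcard, hsat⟩ := exists_isLinkage_of_isBPath hQ
    fun i j hij v hi hj ↦ hdisj hij (hQP i hi) (hQP j hj)
  exact ⟨T, hT, hcard, fun v hv hvT ↦ (hsat v hv hvT).imp fun i hi ↦ hQP i hi⟩

end PathsToLinkage

section LinkageToPaths

open Relation

variable {V : Type*} {A : V → V → Prop} {B : Finset V} {T : Finset (V × V)} {s s' v : V}

lemma IsLinkage.leftUnique (hT : IsLinkage A B T) :
    Relator.LeftUnique fun u v ↦ (u, v) ∈ T :=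
  fun _ _ _ ha hb ↦ congrArg Prod.fst (hT.snd_injOn ha hb rfl)

variable [DecidableEq V]

lemma IsLinkage.notMem_of_mem_image_fst_inter (hT : IsLinkage A B T)
    (hs : s ∈ T.image Prod.fst ∩ B) (a : V) : (a, s) ∉ T := by
  obtain ⟨hsT, hsB⟩ := Finset.mem_inter.1 hs
  obtain ⟨e, he, rfl⟩ := Finset.mem_image.1 hsT
  exact fun ha ↦ hT.fst_ne_snd e he _ ha hsB rfl

lemma IsLinkage.eq_of_reflTransGen (hT : IsLinkage A B T) (hs : s ∈ T.image Prod.fst ∩ B)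
    (hs' : s' ∈ T.image Prod.fst ∩ B) (hv : ReflTransGen (fun u v ↦ (u, v) ∈ T) s v)
    (hv' : ReflTransGen (fun u v ↦ (u, v) ∈ T) s' v) : s = s' :=
  eq_of_reflTransGen_of_leftUnique hT.leftUnique (hT.notMem_of_mem_image_fst_inter hs)
    (hT.notMem_of_mem_image_fst_inter hs') hv hv'

lemma IsLinkage.exists_reflTransGen_notMem_image_fst [Finite V] (hT : IsLinkage A B T)
    (hs : s ∈ T.image Prod.fst ∩ B) :
    ∃ t, ReflTransGen (fun u v ↦ (u, v) ∈ T) s t ∧ t ∉ T.image Prod.fst := by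
  obtain ⟨t, hst, ht⟩ := exists_reflTransGen_forall_not_rel hT.leftUnique
    (hT.notMem_of_mem_image_fst_inter hs)
  refine ⟨t, hst, fun htT ↦ ?_⟩
  obtain ⟨e, he, rfl⟩ := Finset.mem_image.1 htT
  exact ht e.2 he

lemma IsLinkage.card_image_fst_inter [Fintype V] (hT : IsLinkage A B T) {k : ℕ}
    (hcard : T.card = k + Bᶜ.card) :
    (T.image Prod.fst ∩ B).card = k + (Bᶜ \ T.image Prod.fst).card := by
  set D := T.image Prod.fst
  have hD : D.card = T.card := Finset.card_image_of_injOn hT.fst_injOn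
  have hDB : (D ∩ B).card + (D \ B).card = D.card := Finset.card_inter_add_card_sdiff D B
  have hBD : (Bᶜ ∩ D).card + (Bᶜ \ D).card = Bᶜ.card := Finset.card_inter_add_card_sdiff Bᶜ D
  rw [Finset.inter_comm, ← Finset.sdiff_eq_inter_compl] at hBD
  omega

-- Sending a start in `B` to the end of its trail is injective.  Ends outside `B` lie in
-- `Bᶜ \ T.image Prod.fst`, so by `card_image_fst_inter` at least `k` starts have their end in `B`.
lemma IsLinkage.exists_reflTransGen_family [Fintype V] (hT : IsLinkage A B T) {k : ℕ}
    (hcard : T.card = k + Bᶜ.card) :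
    ∃ s t : Fin k → V, s.Injective ∧ ∀ i, s i ∈ T.image Prod.fst ∩ B ∧
      t i ∈ B \ T.image Prod.fst ∧ ReflTransGen (fun u v ↦ (u, v) ∈ T) (s i) (t i) := by
  set D := T.image Prod.fst
  have hex (s) (hs : s ∈ D ∩ B) : ∃ t, ReflTransGen (fun u v ↦ (u, v) ∈ T) s t ∧ t ∉ D :=
    hT.exists_reflTransGen_notMem_image_fst hs
  choose! t t_reach t_notMem using hex
  have t_injOn : Set.InjOn t (D ∩ B : Finset V) := fun s hs s' hs' heq ↦
    hT.eq_of_reflTransGen hs hs' (t_reach s hs) (heq ▸ t_reach s' hs')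
  have card_bad : ((D ∩ B).filter (t · ∉ B)).card ≤ (Bᶜ \ D).card := by
    refine Finset.card_le_card_of_injOn t (fun s hs ↦ ?_)
      (t_injOn.mono (Finset.coe_subset.2 (Finset.filter_subset _ _)))
    obtain ⟨hs, hts⟩ := Finset.mem_filter.1 hs
    exact Finset.mem_sdiff.2 ⟨Finset.mem_compl.2 hts, t_notMem s hs⟩
  have card_good : k ≤ ((D ∩ B).filter (t · ∈ B)).card := by
    have := (D ∩ B).card_filter_add_card_filter_not (t · ∈ B)
    have card_starts : (D ∩ B).card = k + (Bᶜ \ D).card := hT.card_image_fst_inter hcard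
    omega
  obtain ⟨S, hS, hSk⟩ := Finset.exists_subset_card_eq card_good
  let e : Fin k ≃ S := (S.equivFinOfCardEq hSk).symm
  refine ⟨fun i ↦ e i, fun i ↦ t (e i), Subtype.val_injective.comp e.injective, fun i ↦ ?_⟩
  obtain ⟨hi, hti⟩ := Finset.mem_filter.1 (hS (e i).2)
  exact ⟨hi, Finset.mem_sdiff.2 ⟨hti, t_notMem _ hi⟩, t_reach _ hi⟩

lemma IsLinkage.exists_isPathPacking [Fintype V] (hT : IsLinkage A B T) {k : ℕ}
    (hcard : T.card = k + Bᶜ.card) :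
    ∃ P : Fin k → List V, IsPathPacking A B B P ∧ ∀ i, ∀ v ∈ P i, SaturatedBy T v := by
  obtain ⟨s, t, s_inj, hst⟩ := hT.exists_reflTransGen_family hcard
  choose hs ht hreach using hst
  choose P hP using fun i ↦ exists_isPathFT_of_reflTransGen (hreach i)
  refine ⟨P, ⟨fun i ↦ ?_, fun i j hij v hi hj ↦ ?_⟩, fun i v hv ↦ ?_⟩
  · obtain ⟨hsT, hsB⟩ := Finset.mem_inter.1 (hs i)
    obtain ⟨htB, htT⟩ := Finset.mem_sdiff.1 (ht i)
    have hpath : IsPath A (P i) :=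
      (hP i).1.of_imp_of_ne fun u v huv hne ↦ (hT.rel_or_eq _ huv).resolve_right hne
    exact ⟨s i, t i, hsB, htB, ne_of_mem_of_not_mem hsT htT, hpath, (hP i).2⟩
  · exact hij (s_inj (hT.eq_of_reflTransGen (hs i) (hs j)
      ((hP i).reflTransGen_of_mem hi) ((hP j).reflTransGen_of_mem hj)))
  · rcases ReflTransGen.cases_tail ((hP i).reflTransGen_of_mem hv) with rfl | ⟨c, -, hc⟩
    · obtain ⟨e, he, hes⟩ := Finset.mem_image.1 (Finset.mem_inter.1 (hs i)).1
      exact ⟨e, he, .inl hes.symm⟩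
    · exact ⟨_, hc, .inr rfl⟩

end LinkageToPaths

theorem exists_isPathPacking_iff_exists_isLinkage {V : Type*} [Fintype V] [DecidableEq V]
    {A : V → V → Prop} {B U : Finset V} (hU : U ⊆ B) (k : ℕ) :
    (∃ P : Fin k → List V, IsPathPacking A B B P ∧ ∀ i, ∀ v ∈ U, v ∉ P i) ↔
      ∃ T, IsLinkage A B T ∧ T.card = k + Bᶜ.card ∧ ∀ v ∈ U, ¬ SaturatedBy T v := by
  constructor
  · rintro ⟨P, hP, hPU⟩
    obtain ⟨T, hT, hcard, hsat⟩ := hP.exists_isLinkage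
    refine ⟨T, hT, by rwa [Fintype.card_fin] at hcard, fun v hv hvT ↦ ?_⟩
    obtain ⟨i, hi⟩ := hsat v (hU hv) hvT
    exact hPU i v hv hi
  · rintro ⟨T, hT, hcard, hTU⟩
    obtain ⟨P, hP, hsat⟩ := hT.exists_isPathPacking hcard
    exact ⟨P, hP, fun i v hv hi ↦ hTU v hv (hsat i v hi)⟩

lemma isPathPacking_union_iff {V ι : Type*} [DecidableEq V] {A : V → V → Prop} {X Y : Finset V}
    {P : ι → List V} (hX : ∀ a b, A a b → b ∈ X → b ∈ Y) (hY : ∀ a b, A a b → a ∈ Y → a ∈ X) :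
    IsPathPacking A (X ∪ Y) (X ∪ Y) P ↔ IsPathPacking A X Y P := by
  refine and_congr_left fun _ ↦ forall_congr' fun i ↦ ⟨?_, ?_⟩
  · rintro ⟨x, y, hx, hy, hxy, hp⟩
    obtain ⟨b, hxb, -⟩ := hp.reflTransGen.cases_head.resolve_left hxy
    obtain ⟨c, -, hcy⟩ := hp.reflTransGen.cases_tail.resolve_left hxy.symm
    exact ⟨x, y, (Finset.mem_union.1 hx).elim id (hY x b hxb),
      (Finset.mem_union.1 hy).elim (hX c y hcy) id, hxy, hp⟩
  · rintro ⟨x, y, hx, hy, hxy, hp⟩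
    exact ⟨x, y, Finset.mem_union_left _ hx, Finset.mem_union_right _ hy, hxy, hp⟩

section Matching

variable {W : Type*} {R S : W → W → Prop} {M : Finset (W × W)}

lemma IsMatching.mono (hM : IsMatching R M) (hRS : ∀ a b, R a b → S a b) : IsMatching S M :=
  ⟨fun e he ↦ ⟨hRS _ _ (hM.1 e he).1, (hM.1 e he).2⟩, hM.2⟩

lemma IsMatching.exists_oriented (hM : IsMatching (fun a b ↦ R a b ∨ R b a) M) :
    ∃ M', IsMatching R M' ∧ M'.card = M.card ∧ ∀ w, SaturatedBy M' w ↔ SaturatedBy M w := by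
  classical
  let orient (e : W × W) : W × W := if R e.1 e.2 then e else e.swap
  have orient_eq (e) : orient e = e ∨ orient e = e.swap := by
    by_cases h : R e.1 e.2 <;> simp [orient, h]
  have rel_orient (e) (he : e ∈ M) : R (orient e).1 (orient e).2 := by
    by_cases h : R e.1 e.2
    · simp [orient, h]
    · simpa [orient, h] using (hM.1 e he).1.resolve_left h
  have orient_injOn : Set.InjOn orient M := fun e he f hf hef ↦ by
    by_contra hne
    have := hM.2 e he f hf hne
    grind [orient_eq e, orient_eq f]
  refine ⟨M.image orient, ⟨?_, ?_⟩, Finset.card_image_of_injOn orient_injOn, fun w ↦ ?_⟩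
  · simp only [Finset.forall_mem_image]
    intro e he
    have := (hM.1 e he).2
    exact ⟨rel_orient e he, by grind⟩
  · simp only [Finset.forall_mem_image]
    intro e he f hf hne
    have := hM.2 e he f hf fun hef ↦ hne (congrArg orient hef)
    grind
  · simp only [SaturatedBy, Finset.exists_mem_image]
    refine exists_congr fun e ↦ and_congr_right fun _ ↦ ?_
    rcases orient_eq e with h | h <;> simp [h, or_comm]

end Matching

section AuxGraph

variable {V : Type*} [DecidableEq V]

/-- The vertex of the auxiliary graph at which the edge of an arc with head `v` ends: `v` itself if
`v ∈ B` and its copy otherwise. -/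
def auxHead (B : Finset V) (v : V) : V ⊕ V :=
  if v ∈ B then .inl v else .inr v

/-- The edge of the auxiliary graph associated with an arc, or with a loop standing for the edge
`{v, v'}`. -/
def auxEdge (B : Finset V) (e : V × V) : (V ⊕ V) × (V ⊕ V) :=
  (.inl e.1, auxHead B e.2)

variable {A : V → V → Prop} {B X Y : Finset V} {T : Finset (V × V)} {u v : V}

lemma inl_eq_auxHead_iff : .inl u = auxHead B v ↔ u = v ∧ u ∈ B := by
  unfold auxHead
  split_ifs <;> grind

lemma auxHead_injective : (auxHead B).Injective := by
  intro u v h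
  unfold auxHead at h
  split_ifs at h <;> simp_all

lemma auxEdge_injective : (auxEdge B).Injective := fun _ _ h ↦
  Prod.ext (Sum.inl_injective (congrArg Prod.fst h)) (auxHead_injective (congrArg Prod.snd h))

lemma auxRel_inl_auxHead_iff :
    auxRel A X Y (.inl u) (auxHead (X ∪ Y) v) ↔ A u v ∨ u = v ∧ u ∉ X ∪ Y := by
  unfold auxHead
  split_ifs with hv <;> simp only [auxRel] <;> grind

lemma exists_auxEdge_eq_of_auxRel {a b : V ⊕ V} (h : auxRel A X Y a b) :
    ∃ e, auxEdge (X ∪ Y) e = (a, b) := by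
  match a, b, h with
  | .inl u, .inl v, h => exact ⟨(u, v), by rw [auxEdge, auxHead, if_pos h.2]⟩
  | .inl u, .inr v, h =>
    have hv : v ∉ X ∪ Y := h.elim And.right fun ⟨huv, hu⟩ ↦ huv ▸ hu
    exact ⟨(u, v), by rw [auxEdge, auxHead, if_neg hv]⟩

lemma isMatching_auxRel_image_auxEdge_iff :
    IsMatching (auxRel A X Y) (T.image (auxEdge (X ∪ Y))) ↔ IsLinkage A (X ∪ Y) T := by
  simp only [IsMatching, Finset.forall_mem_image, auxEdge_injective.ne_iff]
  simp only [auxEdge, auxRel_inl_auxHead_iff, auxHead_injective.ne_iff, Sum.inl_injective.ne_iff]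
  simp only [ne_eq, inl_eq_auxHead_iff, eq_comm (b := Sum.inl _)]
  constructor
  · rintro ⟨hedge, hdisj⟩
    refine ⟨fun e he ↦ (hedge he).1.imp_right And.left, ?_, ?_, ?_⟩
    · exact fun e he f hf hef ↦ by_contra fun hne ↦ (hdisj he hf hne).1 hef
    · exact fun e he f hf hef ↦ by_contra fun hne ↦ (hdisj he hf hne).2.2.2 hef
    · rintro e he f hf heB hef
      rcases eq_or_ne e f with rfl | hne
      · exact (hedge he).2 ⟨hef, heB⟩
      · exact (hdisj he hf hne).2.1 ⟨hef, heB⟩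
  · intro hT
    have separated {e f} (he : e ∈ T) (hf : f ∈ T) : ¬(e.1 = f.2 ∧ e.1 ∈ X ∪ Y) :=
      fun ⟨hef, heB⟩ ↦ hT.fst_ne_snd e he f hf heB hef
    refine ⟨fun e he ↦ ⟨?_, separated he he⟩, fun e he f hf hne ↦
      ⟨fun hef ↦ hne (hT.fst_injOn he hf hef), separated he hf, separated hf he,
        fun hef ↦ hne (hT.snd_injOn he hf hef)⟩⟩
    exact (hT.rel_or_eq e he).imp_right fun hloop ↦ ⟨hloop, fun heB ↦ separated he he ⟨hloop, heB⟩⟩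

lemma saturatedBy_image_auxEdge_inl_iff (hv : v ∈ B) :
    SaturatedBy (T.image (auxEdge B)) (.inl v) ↔ SaturatedBy T v := by
  simp only [SaturatedBy, Finset.exists_mem_image, auxEdge, inl_eq_auxHead_iff, hv, and_true,
    Sum.inl.injEq]

theorem exists_isMatching_auxAdj_iff_exists_isLinkage {U : Finset V} (hU : U ⊆ X ∪ Y) (n : ℕ) :
    (∃ M, IsMatching (auxAdj A X Y) M ∧ M.card = n ∧ ∀ v ∈ U, ¬ SaturatedBy M (.inl v)) ↔
      ∃ T, IsLinkage A (X ∪ Y) T ∧ T.card = n ∧ ∀ v ∈ U, ¬ SaturatedBy T v := by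
  constructor
  · rintro ⟨M, hM, rfl, hMU⟩
    obtain ⟨M', hM', hcard, hsat⟩ := hM.exists_oriented
    obtain ⟨T, -, rfl⟩ : ∃ T : Finset (V × V), (T : Set (V × V)) ⊆ Set.univ ∧
        T.image (auxEdge (X ∪ Y)) = M' :=
      Finset.subset_set_image_iff.1 fun e he ↦
        (exists_auxEdge_eq_of_auxRel (hM'.1 e he).1).imp fun _ h ↦ ⟨trivial, h⟩
    refine ⟨T, isMatching_auxRel_image_auxEdge_iff.1 hM', ?_, fun v hv hvT ↦ ?_⟩
    · rw [← hcard, Finset.card_image_of_injective _ auxEdge_injective]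
    · exact hMU v hv ((hsat _).1 ((saturatedBy_image_auxEdge_inl_iff (hU hv)).2 hvT))
  · rintro ⟨T, hT, rfl, hTU⟩
    refine ⟨T.image (auxEdge (X ∪ Y)),
      (isMatching_auxRel_image_auxEdge_iff.2 hT).mono fun _ _ ↦ .inl,
      Finset.card_image_of_injective _ auxEdge_injective, fun v hv ↦ ?_⟩
    rw [saturatedBy_image_auxEdge_inl_iff (hU hv)]
    exact hTU v hv

end AuxGraph

theorem stmt5 {V : Type*} [Fintype V] [DecidableEq V]
    (A : V → V → Prop) (harc : ∀ a b, A a b → a ≠ b)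
    (X Y : Finset V)
    (hX : ∀ a b, A a b → b ∈ X → b ∈ Y)
    (hY : ∀ a b, A a b → a ∈ Y → a ∈ X)
    (k r : ℕ) :
    (∃ R : Finset V, R ⊆ X ∩ Y ∧ R.card = r ∧
      ∃ P : Fin k → List V,
        (∀ i, ∃ x y, x ∈ X ∧ y ∈ Y ∧ x ≠ y ∧ IsPathFT A x y (P i)) ∧
        (∀ i j, i ≠ j → ∀ v, v ∈ P i → v ∉ P j) ∧
        (∀ i, ∀ v ∈ R, v ∉ P i)) ↔
    (∃ M : Finset ((V ⊕ V) × (V ⊕ V)), IsMatching (auxAdj A X Y) M ∧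
      M.card = k + (Finset.univ \ (X ∪ Y)).card ∧
      ∃ U : Finset V, U ⊆ X ∩ Y ∧ U.card = r ∧
        ∀ v ∈ U, ¬ SaturatedBy M (Sum.inl v)) := by
  have key {U : Finset V} (hU : U ⊆ X ∩ Y) :
      (∃ P : Fin k → List V, IsPathPacking A X Y P ∧ ∀ i, ∀ v ∈ U, v ∉ P i) ↔
        ∃ M, IsMatching (auxAdj A X Y) M ∧ M.card = k + (Finset.univ \ (X ∪ Y)).card ∧
          ∀ v ∈ U, ¬ SaturatedBy M (.inl v) := by
    have hU' : U ⊆ X ∪ Y := hU.trans Finset.inter_subset_union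
    simp only [← isPathPacking_union_iff hX hY, ← Finset.compl_eq_univ_sdiff]
    exact (exists_isPathPacking_iff_exists_isLinkage hU' k).trans
      (exists_isMatching_auxAdj_iff_exists_isLinkage hU' _).symm
  constructor
  · rintro ⟨R, hR, hr, P, hpath, hdisj, hPR⟩
    obtain ⟨M, hM, hcard, hMR⟩ := (key hR).1 ⟨P, ⟨hpath, hdisj⟩, hPR⟩
    exact ⟨M, hM, hcard, R, hR, hr, hMR⟩
  · rintro ⟨M, hM, hcard, U, hU, hr, hMU⟩
    obtain ⟨P, ⟨hpath, hdisj⟩, hPU⟩ := (key hU).2 ⟨M, hM, hcard, hMU⟩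
    exact ⟨U, hU, hr, P, hpath, hdisj, hPU⟩
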